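/- Let C ⊆ F_{q^m}^n be an F_{q^m}-linear code of dimension k with 0 < k < n, and let 1 ≤ r ≤ k. The following conditions are equivalent: (1) C is r-MRD, i.e., d_{R,r}(C) = n − k + r; (2) d_{R,1}(C^⊥) ≥ k − r + 2; (3) for every F_q-subspace L ⊆ F_q^n with dim_{F_q} L ≤ k − r + 1, one has dim_{F_{q^m}}(C^L) = dim_{F_q} L; (4) for every F_q-subspace L ⊆ F_q^n with dim_{F_q} L ≥ n − k + r − 1, one has dim_{F_{q^m}}((C^⊥)^L) = n − k. -/

import Mathlib

open Submodule Module

namespace RankPaper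

variable {n : ℕ}

/-- The coordinatewise `q^i`-th power map on `Fqm^n`. -/
def qpowMap (q i : ℕ) {Fqm : Type} [Field Fqm] (v : Fin n → Fqm) : Fin n → Fqm :=
  fun j => v j ^ q ^ i

/-- The Galois closure `D* = Σ_{i=0}^{m-1} D^{q^i}` of a subspace (as the span of the
union of the images of `D` under the coordinatewise `q^i`-power maps, `0 ≤ i < m`). -/
def galClosure (q m : ℕ) {Fqm : Type} [Field Fqm] (D : Submodule Fqm (Fin n → Fqm)) :
    Submodule Fqm (Fin n → Fqm) :=
  Submodule.span Fqm (⋃ i ∈ Finset.range m, qpowMap q i '' (D : Set (Fin n → Fqm)))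

/-- `D` is Galois closed if `D = D*`. -/
def GaloisClosed (q m : ℕ) {Fqm : Type} [Field Fqm] (D : Submodule Fqm (Fin n → Fqm)) : Prop :=
  galClosure q m D = D

/-- Rank weight of a subspace: `wt_R(D) = dim_{Fqm} D*`. -/
noncomputable def wtR (q m : ℕ) {Fqm : Type} [Field Fqm]
    (D : Submodule Fqm (Fin n → Fqm)) : ℕ :=
  finrank Fqm (galClosure q m D)

/-- Rank weight of a vector: `wt_R(c) = wt_R(span {c})`. -/
noncomputable def wtRv (q m : ℕ) {Fqm : Type} [Field Fqm] (c : Fin n → Fqm) : ℕ :=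
  wtR q m (Submodule.span Fqm ({c} : Set (Fin n → Fqm)))

/-- Hamming weight of a subspace: the number of coordinates where some element is nonzero. -/
noncomputable def wtH {Fqm : Type} [Field Fqm] (D : Submodule Fqm (Fin n → Fqm)) : ℕ :=
  {i : Fin n | ∃ d ∈ D, d i ≠ 0}.ncard

/-- `r`-th generalized rank weight of a linear code. -/
noncomputable def dR (q m : ℕ) {Fqm : Type} [Field Fqm]
    (C : Submodule Fqm (Fin n → Fqm)) (r : ℕ) : ℕ :=
  sInf { dv | ∃ V : Submodule Fqm (Fin n → Fqm),
    GaloisClosed q m V ∧ r ≤ finrank Fqm ↥(C ⊓ V) ∧ dv = finrank Fqm ↥V }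

/-- `r`-th generalized Hamming weight of a linear code. -/
noncomputable def dH {Fqm : Type} [Field Fqm]
    (C : Submodule Fqm (Fin n → Fqm)) (r : ℕ) : ℕ :=
  sInf { w | ∃ D : Submodule Fqm (Fin n → Fqm), D ≤ C ∧ finrank Fqm ↥D = r ∧ w = wtH D }

/-- `r`-th relative generalized rank weight of a nested code pair. -/
noncomputable def MR (q m : ℕ) {Fqm : Type} [Field Fqm]
    (C₁ C₂ : Submodule Fqm (Fin n → Fqm)) (r : ℕ) : ℕ :=
  sInf { dv | ∃ V : Submodule Fqm (Fin n → Fqm), GaloisClosed q m V ∧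
    r ≤ finrank Fqm ↥(C₁ ⊓ V) - finrank Fqm ↥(C₂ ⊓ V) ∧ dv = finrank Fqm ↥V }

/-- Minimum rank distance of an arbitrary (possibly nonlinear) code. -/
noncomputable def dRset (q m : ℕ) {Fqm : Type} [Field Fqm] (C : Set (Fin n → Fqm)) : ℕ :=
  sInf { w | ∃ c₁ ∈ C, ∃ c₂ ∈ C, c₁ ≠ c₂ ∧ w = wtRv q m (c₁ - c₂) }

/-- The linear functional `x ↦ Σ_j x_j y_j` (dot product with `y`). -/
def dotLin {K : Type} [Field K] (y : Fin n → K) : (Fin n → K) →ₗ[K] K :=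
  ∑ j, y j • LinearMap.proj j

/-- Orthogonal complement of a subspace with respect to the standard bilinear form. -/
def perp {K : Type} [Field K] (L : Submodule K (Fin n → K)) : Submodule K (Fin n → K) :=
  ⨅ y ∈ L, LinearMap.ker (dotLin y)

/-- The coordinatewise inclusion `Fq^n → Fqm^n`. -/
def embFq (Fq Fqm : Type) [Field Fq] [Field Fqm] [Algebra Fq Fqm] :
    (Fin n → Fq) →ₗ[Fq] (Fin n → Fqm) :=
  LinearMap.pi fun j => (Algebra.linearMap Fq Fqm).comp (LinearMap.proj j)

/-- `V_L = L ⊗ Fqm`, the `Fqm`-span of `L ⊆ Fq^n` inside `Fqm^n`. -/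
def VL {Fq : Type} (Fqm : Type) [Field Fq] [Field Fqm] [Algebra Fq Fqm]
    (L : Submodule Fq (Fin n → Fq)) : Submodule Fqm (Fin n → Fqm) :=
  Submodule.span Fqm (embFq Fq Fqm '' (L : Set (Fin n → Fq)))

/-- Rank-punctured code `C^L`: the image of `C` in `Fqm^n / V_{L^⊥}`. -/
noncomputable def punct {Fq Fqm : Type} [Field Fq] [Field Fqm] [Algebra Fq Fqm]
    (L : Submodule Fq (Fin n → Fq)) (C : Submodule Fqm (Fin n → Fqm)) :
    Submodule Fqm ((Fin n → Fqm) ⧸ VL Fqm (perp L)) :=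
  Submodule.map (VL Fqm (perp L)).mkQ C

/-!
Expanding a vector of a Galois closed subspace in a trace-dual basis of `Fqm` over `Fq`, the
coefficient vectors are traces, hence sums of Frobenius conjugates that stay in the subspace. So the
Galois closed subspaces of `Fqm^n` are exactly the spaces `V_L`, and `t < d_{R,r}(C)` says that
`dim (C ∩ V_L) < r` whenever `dim L ≤ t`. Since `(C + V_L)^⊥ = C^⊥ ∩ V_{L^⊥}`, the dimensions of
`C ∩ V_L` and `C^⊥ ∩ V_{L^⊥}` differ by `dim C + dim L - n`, which trades lower bounds on the
generalized rank weights of `C` for lower bounds on those of `C^⊥`. Conditions (2), (3) and (4) all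
say that `C^⊥ ∩ V_L = 0` whenever `dim L ≤ k - r + 1`, and (1) is the case of equality in the
Singleton bound `d_{R,r}(C) ≤ n - k + r`, to which this duality applies.
-/

theorem exists_le_finrank_eq {K V : Type*} [DivisionRing K] [AddCommGroup V] [Module K V]
    [FiniteDimensional K V] (W : Submodule K V) {d : ℕ} (hWd : finrank K W ≤ d)
    (hdV : d ≤ finrank K V) : ∃ W', W ≤ W' ∧ finrank K W' = d := by
  induction d, hWd using Nat.le_induction with
  | base => exact ⟨W, le_rfl, rfl⟩
  | succ d _ ih =>
    obtain ⟨W', hWW', hW'⟩ := ih (by omega)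
    have hlt : W' < ⊤ := lt_top_of_finrank_lt_finrank (by omega)
    obtain ⟨v, -, hv⟩ := SetLike.exists_of_lt hlt
    exact ⟨W' ⊔ K ∙ v, hWW'.trans le_sup_left, by rw [finrank_sup_span_singleton hv, hW']⟩

theorem finrank_map_mkQ_add_finrank_inf {K V : Type*} [DivisionRing K] [AddCommGroup V]
    [Module K V] (S C : Submodule K V) [FiniteDimensional K C] :
    finrank K (C.map S.mkQ) + finrank K ↥(C ⊓ S) = finrank K C := by
  have hker : finrank K (LinearMap.ker (S.mkQ.domRestrict C)) = finrank K ↥(C ⊓ S) := by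
    rw [LinearMap.ker_domRestrict, ker_mkQ, ← finrank_map_subtype_eq, map_comap_subtype]
  rw [← LinearMap.range_domRestrict, ← hker, LinearMap.finrank_range_add_finrank_ker]

section Perp

variable {K : Type} [Field K] {A B L : Submodule K (Fin n → K)} {x : Fin n → K}

theorem mem_perp : x ∈ perp L ↔ ∀ y ∈ L, y ⬝ᵥ x = 0 := by
  simp [perp, dotLin, dotProduct]

theorem le_perp_comm : A ≤ perp B ↔ B ≤ perp A := by
  simp only [SetLike.le_def, mem_perp]
  exact ⟨fun h y hy x hx => dotProduct_comm x y ▸ h hx y hy,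
    fun h x hx y hy => dotProduct_comm y x ▸ h hy x hx⟩

theorem mem_perp_span {s : Set (Fin n → K)} :
    x ∈ perp (span K s) ↔ ∀ y ∈ s, y ⬝ᵥ x = 0 := by
  rw [← span_singleton_le_iff_mem, le_perp_comm, span_le]
  simp only [Set.subset_def, SetLike.mem_coe, mem_perp, mem_span_singleton]
  refine forall₂_congr fun y _ => ⟨fun h => ?_, ?_⟩
  · rw [dotProduct_comm, h x ⟨1, one_smul K x⟩]
  · rintro h _ ⟨a, rfl⟩
    rw [smul_dotProduct, dotProduct_comm, h, smul_zero]

theorem perp_sup (A B : Submodule K (Fin n → K)) : perp (A ⊔ B) = perp A ⊓ perp B :=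
  eq_of_forall_le_iff fun D => by
    rw [le_perp_comm, sup_le_iff, le_inf_iff, le_perp_comm, le_perp_comm (A := B)]

theorem perp_eq_orthogonal (L : Submodule K (Fin n → K)) :
    perp L = LinearMap.BilinForm.orthogonal (dotProductBilin K K) L :=
  Submodule.ext fun _ => mem_perp

theorem ker_dotProductBilin :
    LinearMap.ker (dotProductBilin K K : LinearMap.BilinForm K (Fin n → K)) = ⊥ :=
  LinearMap.ker_eq_bot'.2 fun v hv => dotProduct_eq_zero v (LinearMap.congr_fun hv)

theorem finrank_add_finrank_perp (L : Submodule K (Fin n → K)) :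
    finrank K L + finrank K (perp L) = n := by
  have h := LinearMap.BilinForm.finrank_add_finrank_orthogonal'
    (B := (dotProductBilin K K : LinearMap.BilinForm K (Fin n → K))) L
  rwa [← perp_eq_orthogonal, ker_dotProductBilin, inf_bot_eq, finrank_bot, add_zero,
    finrank_fin_fun] at h

theorem perp_perp (L : Submodule K (Fin n → K)) : perp (perp L) = L := by
  have hL := finrank_add_finrank_perp L
  have hperp := finrank_add_finrank_perp (perp L)
  exact (eq_of_le_of_finrank_eq (le_perp_comm.1 le_rfl) (by omega)).symm

theorem perp_surjective :
    Function.Surjective (perp : Submodule K (Fin n → K) → Submodule K (Fin n → K)) :=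
  Function.Involutive.surjective perp_perp

theorem finrank_inf_add (A B : Submodule K (Fin n → K)) :
    finrank K ↥(A ⊓ B) + n = finrank K A + finrank K B + finrank K ↥(perp A ⊓ perp B) := by
  have hsup := finrank_sup_add_finrank_inf_eq A B
  have hperp := finrank_add_finrank_perp (A ⊔ B)
  rw [perp_sup] at hperp
  omega

end Perp

section Extension

variable {F E : Type} [Field F] [Field E] [Algebra F E]

theorem embFq_apply (x : Fin n → F) (j : Fin n) : embFq F E x j = algebraMap F E (x j) := rfl

theorem embFq_mem_VL {L : Submodule F (Fin n → F)} {x : Fin n → F} (hx : x ∈ L) :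
    embFq F E x ∈ VL E L :=
  subset_span (Set.mem_image_of_mem _ hx)

theorem VL_mono {L L' : Submodule F (Fin n → F)} (h : L ≤ L') : VL E L ≤ VL E L' :=
  span_mono (Set.image_mono h)

theorem VL_span (s : Set (Fin n → F)) : VL E (span F s) = span E (embFq F E '' s) := by
  rw [VL, ← map_coe, map_span, span_span_of_tower]

theorem VL_sup (L L' : Submodule F (Fin n → F)) : VL E (L ⊔ L') = VL E L ⊔ VL E L' := by
  rw [← span_eq L, ← span_eq L', ← span_union, VL_span, Set.image_union, span_union, VL_span,
    VL_span]

theorem embFq_basisFun (i : Fin n) :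
    embFq F E (Pi.basisFun F (Fin n) i) = Pi.basisFun E (Fin n) i := by
  ext j
  simp [embFq_apply, Pi.single_apply, apply_ite (algebraMap F E)]

theorem VL_top : VL E (⊤ : Submodule F (Fin n → F)) = ⊤ := by
  rw [← (Pi.basisFun F (Fin n)).span_eq, VL_span, ← Set.range_comp,
    ← (Pi.basisFun E (Fin n)).span_eq]
  exact congrArg (span E <| Set.range ·) (funext embFq_basisFun)

theorem finrank_VL_le (L : Submodule F (Fin n → F)) : finrank E (VL E L) ≤ finrank F L := by
  let b := finBasis F L
  have hb : span F (Set.range (L.subtype ∘ b)) = L := by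
    rw [Set.range_comp, ← map_span, b.span_eq, map_subtype_top]
  calc finrank E (VL E L)
      = finrank E (span E (Set.range (embFq F E ∘ L.subtype ∘ b))) := by
        rw [Set.range_comp, ← VL_span, hb]
    _ ≤ Fintype.card (Fin (finrank F L)) := finrank_range_le_card _
    _ = finrank F L := Fintype.card_fin _

theorem finrank_VL (L : Submodule F (Fin n → F)) : finrank E (VL E L) = finrank F L := by
  obtain ⟨L', hLL'⟩ := Submodule.exists_isCompl L
  have hdim := finrank_add_eq_of_isCompl hLL'
  have hsum := finrank_add_le_finrank_add_finrank (VL E L) (VL E L')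
  rw [← VL_sup, hLL'.sup_eq_top, VL_top, finrank_top, finrank_fin_fun] at hsum
  rw [finrank_fin_fun] at hdim
  have hL := finrank_VL_le (E := E) L
  have hL' := finrank_VL_le (E := E) L'
  omega

theorem embFq_dotProduct_embFq (x y : Fin n → F) :
    embFq F E x ⬝ᵥ embFq F E y = algebraMap F E (x ⬝ᵥ y) := by
  simp [dotProduct, embFq_apply]

theorem perp_VL (L : Submodule F (Fin n → F)) : perp (VL E L) = VL E (perp L) := by
  have hle : VL E (perp L) ≤ perp (VL E L) := by
    refine span_le.2 (Set.image_subset_iff.2 fun x hx => mem_perp_span.2 ?_)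
    rintro _ ⟨y, hy, rfl⟩
    rw [embFq_dotProduct_embFq, mem_perp.1 hx y hy, map_zero]
  have hF := finrank_add_finrank_perp L
  have hE := finrank_add_finrank_perp (VL E L)
  rw [finrank_VL] at hE
  exact (eq_of_le_of_finrank_eq hle (by rw [finrank_VL]; omega)).symm

theorem finrank_inf_VL_add (C : Submodule E (Fin n → E)) (L : Submodule F (Fin n → F)) :
    finrank E ↥(C ⊓ VL E L) + n =
      finrank E C + finrank F L + finrank E ↥(perp C ⊓ VL E (perp L)) := by
  rw [finrank_inf_add, perp_VL, finrank_VL]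

theorem finrank_punct_add (L : Submodule F (Fin n → F)) (C : Submodule E (Fin n → E)) :
    finrank E (punct L C) + finrank E ↥(C ⊓ VL E (perp L)) = finrank E C :=
  finrank_map_mkQ_add_finrank_inf _ C

theorem finrank_punct_eq_finrank_code_iff_disjoint (L : Submodule F (Fin n → F))
    (C : Submodule E (Fin n → E)) :
    finrank E (punct L C) = finrank E C ↔ Disjoint C (VL E (perp L)) := by
  have h := finrank_punct_add L C
  rw [disjoint_iff, ← finrank_eq_zero (R := E)]
  omega

theorem finrank_punct_eq_finrank_iff_disjoint_perp (L : Submodule F (Fin n → F))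
    (C : Submodule E (Fin n → E)) :
    finrank E (punct L C) = finrank F L ↔ Disjoint (perp C) (VL E L) := by
  have hpunct := finrank_punct_add L C
  have hL := finrank_add_finrank_perp L
  have hinf := finrank_inf_VL_add C (perp L)
  rw [perp_perp] at hinf
  rw [disjoint_iff, ← finrank_eq_zero (R := E)]
  omega

theorem algHom_comp_mem_VL (σ : E →ₐ[F] E) {L : Submodule F (Fin n → F)} {x : Fin n → E}
    (hx : x ∈ VL E L) : σ ∘ x ∈ VL E L := by
  induction hx using span_induction with
  | mem x hx =>
    obtain ⟨y, hy, rfl⟩ := hx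
    have hfix : σ ∘ embFq F E y = embFq F E y := funext fun j => σ.commutes (y j)
    rw [hfix]
    exact embFq_mem_VL hy
  | zero =>
    have hzero : σ ∘ (0 : Fin n → E) = 0 := funext fun _ => map_zero σ
    rw [hzero]
    exact zero_mem _
  | add x y _ _ hx hy =>
    have hadd : σ ∘ (x + y) = σ ∘ x + σ ∘ y := funext fun j => map_add σ (x j) (y j)
    rw [hadd]
    exact add_mem hx hy
  | smul c x _ hx =>
    have hsmul : σ ∘ (c • x) = σ c • (σ ∘ x) := funext fun j => map_mul σ c (x j)
    rw [hsmul]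
    exact smul_mem _ _ hx

theorem eq_sum_traceDual_smul_embFq {ι : Type*} [Fintype ι] [DecidableEq ι]
    [FiniteDimensional F E] [Algebra.IsSeparable F E] (b : Basis ι F E) (v : Fin n → E) :
    v = ∑ i, b.traceDual i • embFq F E (fun j => Algebra.trace F E ((b i • v) j)) := by
  ext j
  have h := b.traceDual.sum_repr (v j)
  simp only [Basis.traceDual_repr_apply, Algebra.traceForm_apply] at h
  conv_lhs => rw [← h]
  simp [embFq_apply, Algebra.smul_def, mul_comm]

end Extension

section GaloisDescent

theorem qpowMap_mem_galClosure {q m i : ℕ} {K : Type} [Field K] {D : Submodule K (Fin n → K)}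
    (hi : i < m) {x : Fin n → K} (hx : x ∈ D) : qpowMap q i x ∈ galClosure q m D :=
  subset_span <| Set.mem_biUnion (Finset.mem_coe.2 (Finset.mem_range.2 hi)) ⟨x, hx, rfl⟩

variable {F E : Type} [Field F] [Field E] [Algebra F E]

theorem qpowMap_card_mem_VL [Finite F] (i : ℕ) {L : Submodule F (Fin n → F)} {x : Fin n → E}
    (hx : x ∈ VL E L) : qpowMap (Nat.card F) i x ∈ VL E L := by
  have := Fintype.ofFinite F
  have hfrob : qpowMap (Nat.card F) i x = (FiniteField.frobeniusAlgHom F E ^ i) ∘ x := by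
    ext j
    simp only [qpowMap, Function.comp_apply, AlgHom.coe_pow, FiniteField.coe_frobeniusAlgHom,
      pow_iterate, Nat.card_eq_fintype_card]
  rw [hfrob]
  exact algHom_comp_mem_VL _ hx

theorem galoisClosed_VL [Finite F] [FiniteDimensional F E] (L : Submodule F (Fin n → F)) :
    GaloisClosed (Nat.card F) (finrank F E) (VL E L) := by
  refine le_antisymm (span_le.2 ?_) fun x hx => ?_
  · simp only [Set.iUnion_subset_iff, Set.image_subset_iff]
    exact fun i _ x hx => qpowMap_card_mem_VL i hx
  · have hzero : qpowMap (Nat.card F) 0 x = x := by ext; simp [qpowMap]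
    exact hzero ▸ qpowMap_mem_galClosure finrank_pos hx

variable [Finite E]

theorem embFq_trace_eq_sum_qpowMap (v : Fin n → E) :
    embFq F E (fun j => Algebra.trace F E (v j)) =
      ∑ i ∈ Finset.range (finrank F E), qpowMap (Nat.card F) i v := by
  ext j
  simp [embFq_apply, qpowMap, FiniteField.algebraMap_trace_eq_sum_pow]

theorem embFq_trace_mem_of_galoisClosed {V : Submodule E (Fin n → E)}
    (hV : GaloisClosed (Nat.card F) (finrank F E) V) {v : Fin n → E} (hv : v ∈ V) :
    embFq F E (fun j => Algebra.trace F E (v j)) ∈ V := by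
  rw [embFq_trace_eq_sum_qpowMap, ← hV]
  exact sum_mem fun i hi => qpowMap_mem_galClosure (Finset.mem_range.1 hi) hv

theorem galoisClosed_iff_exists_VL_eq {V : Submodule E (Fin n → E)} :
    GaloisClosed (Nat.card F) (finrank F E) V ↔ ∃ L : Submodule F (Fin n → F), VL E L = V := by
  have : Finite F := Finite.of_injective _ (algebraMap F E).injective
  refine ⟨fun hV => ?_, fun ⟨L, hL⟩ => hL ▸ galoisClosed_VL L⟩
  refine ⟨(V.restrictScalars F).comap (embFq F E),
    le_antisymm (span_le.2 (Set.image_preimage_subset _ _)) fun v hv => ?_⟩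
  let b := finBasis F E
  rw [eq_sum_traceDual_smul_embFq b v]
  exact sum_mem fun i _ => smul_mem _ _ <| embFq_mem_VL <|
    embFq_trace_mem_of_galoisClosed hV (V.smul_mem (b i) hv)

end GaloisDescent

section GeneralizedRankWeight

variable {F E : Type} [Field F] [Field E] [Algebra F E] [Finite E]
  {C : Submodule E (Fin n → E)} {r s t u : ℕ}

theorem lt_dR_iff (hr : r ≤ finrank E C) :
    t < dR (Nat.card F) (finrank F E) C r ↔
      ∀ L : Submodule F (Fin n → F), finrank F L ≤ t → finrank E ↥(C ⊓ VL E L) < r := by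
  have : Finite F := Finite.of_injective _ (algebraMap F E).injective
  have hne : {d | ∃ V : Submodule E (Fin n → E), GaloisClosed (Nat.card F) (finrank F E) V ∧
      r ≤ finrank E ↥(C ⊓ V) ∧ d = finrank E V}.Nonempty :=
    ⟨_, VL E (⊤ : Submodule F (Fin n → F)), galoisClosed_VL _,
      by rwa [VL_top, inf_top_eq], rfl⟩
  rw [← Nat.succ_le_iff, dR, le_csInf_iff (OrderBot.bddBelow _) hne]
  constructor
  · intro h L hL
    by_contra! hr'
    have := h _ ⟨_, galoisClosed_VL L, hr', rfl⟩
    rw [finrank_VL] at this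
    omega
  · rintro h _ ⟨V, hV, hrV, rfl⟩
    obtain ⟨L, rfl⟩ := galoisClosed_iff_exists_VL_eq.1 hV
    rw [finrank_VL]
    by_contra! hL
    exact (h L (by omega)).not_ge hrV

theorem lt_dR_iff_forall_finrank_eq (hr : r ≤ finrank E C) (ht : t ≤ n) :
    t < dR (Nat.card F) (finrank F E) C r ↔
      ∀ L : Submodule F (Fin n → F), finrank F L = t → finrank E ↥(C ⊓ VL E L) < r := by
  rw [lt_dR_iff hr]
  refine ⟨fun h L hL => h L hL.le, fun h L hL => ?_⟩
  obtain ⟨L', hLL', hL'⟩ := exists_le_finrank_eq L hL (by rwa [finrank_fin_fun])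
  exact (finrank_mono (inf_le_inf_left C (VL_mono hLL'))).trans_lt (h L' hL')

theorem lt_dR_one_iff (hC : C ≠ ⊥) :
    t < dR (Nat.card F) (finrank F E) C 1 ↔
      ∀ L : Submodule F (Fin n → F), finrank F L ≤ t → Disjoint C (VL E L) := by
  have hpos : 1 ≤ finrank E C := one_le_finrank_iff.2 hC
  rw [lt_dR_iff hpos]
  simp only [Nat.lt_one_iff, finrank_eq_zero, disjoint_iff]

theorem dR_add_finrank_le (hr : r ≤ finrank E C) :
    dR (Nat.card F) (finrank F E) C r + finrank E C ≤ n + r := by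
  have hC := finrank_add_finrank_perp C
  by_contra! hlt
  obtain ⟨L, -, hL⟩ := exists_le_finrank_eq (⊥ : Submodule F (Fin n → F))
    (d := n + r - finrank E C) (by simp) (by rw [finrank_fin_fun]; omega)
  have hinf := finrank_inf_VL_add C L
  have := (lt_dR_iff hr).1 (by omega) L hL.le
  omega

theorem lt_dR_iff_lt_dR_perp (hr : r ≤ finrank E C) (hs : s ≤ finrank E (perp C))
    (htu : t + u = n) (hrs : r + u = s + finrank E C) :
    t < dR (Nat.card F) (finrank F E) C r ↔ u < dR (Nat.card F) (finrank F E) (perp C) s := by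
  rw [lt_dR_iff_forall_finrank_eq hr (by omega), lt_dR_iff_forall_finrank_eq hs (by omega),
    perp_surjective.forall]
  refine forall_congr' fun L => ?_
  have hL := finrank_add_finrank_perp L
  have hinf := finrank_inf_VL_add C (perp L)
  rw [perp_perp] at hinf
  omega

theorem lt_dR_one_iff_finrank_punct (hC : C ≠ ⊥) :
    t < dR (Nat.card F) (finrank F E) C 1 ↔
      ∀ L : Submodule F (Fin n → F), n ≤ finrank F L + t →
        finrank E (punct L C) = finrank E C := by
  rw [lt_dR_one_iff hC, perp_surjective.forall]
  refine forall_congr' fun L => ?_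
  have hL := finrank_add_finrank_perp L
  rw [finrank_punct_eq_finrank_code_iff_disjoint,
    show finrank F (perp L) ≤ t ↔ n ≤ finrank F L + t by omega]

theorem lt_dR_perp_one_iff_finrank_punct (hC : perp C ≠ ⊥) :
    t < dR (Nat.card F) (finrank F E) (perp C) 1 ↔
      ∀ L : Submodule F (Fin n → F), finrank F L ≤ t →
        finrank E (punct L C) = finrank F L := by
  simp only [lt_dR_one_iff hC, finrank_punct_eq_finrank_iff_disjoint_perp]

end GeneralizedRankWeight

/-- characterizations of `r`-MRD codes via the dual minimum rank
distance and dimensions of rank-punctured codes. -/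
theorem stmt15 (q m n k r : ℕ) (Fq Fqm : Type) [Field Fq] [Field Fqm] [Algebra Fq Fqm]
    [Finite Fqm] (hq : Nat.card Fq = q) (hm : finrank Fq Fqm = m)
    (C : Submodule Fqm (Fin n → Fqm)) (hk : finrank Fqm C = k)
    (hk0 : 0 < k) (hkn : k < n) (hr1 : 1 ≤ r) (hrk : r ≤ k) :
    [ -- (1) C is r-MRD
      dR q m C r = n - k + r,
      -- (2) the dual has minimum rank distance at least k - r + 2
      k - r + 2 ≤ dR q m (perp C) 1,
      -- (3) puncturing on small spaces preserves the dimension of L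
      (∀ L : Submodule Fq (Fin n → Fq), finrank Fq L ≤ k - r + 1 →
        finrank Fqm (punct L C) = finrank Fq L),
      -- (4) puncturing the dual on large spaces gives full dimension n - k
      (∀ L : Submodule Fq (Fin n → Fq), n - k + r - 1 ≤ finrank Fq L →
        finrank Fqm (punct L (perp C)) = n - k) ].TFAE := by
  subst hq hm hk
  have hdual := finrank_add_finrank_perp C
  have hperp : perp C ≠ ⊥ := one_le_finrank_iff.1 (by omega)
  tfae_have 1 ↔ 2 := by
    have hsingleton := dR_add_finrank_le (F := Fq) hrk
    have hduality := lt_dR_iff_lt_dR_perp (F := Fq) (t := n - finrank Fqm C + r - 1)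
      (u := finrank Fqm C - r + 1) (s := 1) hrk (by omega) (by omega) (by omega)
    omega
  tfae_have 2 ↔ 3 := lt_dR_perp_one_iff_finrank_punct hperp
  tfae_have 2 ↔ 4 := by
    refine (lt_dR_one_iff_finrank_punct hperp).trans (forall_congr' fun L => ?_)
    rw [show finrank Fqm (perp C) = n - finrank Fqm C by omega]
    exact imp_congr_left (by omega)
  tfae_finish

end RankPaper
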